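/- Let R ⊆ S be a catenarian FCP ring extension, let f : R → R' be a flat epimorphism of commutative rings (R' is flat as an R-module and f is an epimorphism in the category of commutative rings), and set S' := R' ⊗_R S. Then the induced extension R' ⊆ S' (the map R' → R' ⊗_R S, which is injective by flatness) is catenarian. -/

import Mathlib

/-- A maximal chain of length `n` from `T` to `U`: each step is a covering. -/
def IsMaxChainFromTo {α : Type*} [PartialOrder α] (T U : α) (n : ℕ)
    (c : Fin (n + 1) → α) : Prop :=
  c 0 = T ∧ c (Fin.last n) = U ∧ ∀ i : Fin n, c i.castSucc ⋖ c i.succ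

/-- The subextension determined by `T ≤ U` is catenarian: all maximal chains from
`T` to `U` have the same length. -/
def IsCatenarianFromTo {α : Type*} [PartialOrder α] (T U : α) : Prop :=
  ∀ (n m : ℕ) (c : Fin (n + 1) → α) (d : Fin (m + 1) → α),
    IsMaxChainFromTo T U n c → IsMaxChainFromTo T U m d → n = m

/-- The extension `R ⊆ S` has FCP: every chain of `R`-subalgebras of `S` is finite. -/
def IsFCPExt (R S : Type*) [CommRing R] [CommRing S] [Algebra R S] : Prop :=
  ∀ C : Set (Subalgebra R S), IsChain (· ≤ ·) C → C.Finite

/-- The extension `R ⊆ S` is catenarian. -/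
def IsCatenarianExt (R S : Type*) [CommRing R] [CommRing S] [Algebra R S] : Prop :=
  IsCatenarianFromTo (⊥ : Subalgebra R S) ⊤

/-- The length `ℓ[T,U]`: the supremum of lengths of chains from `T` to `U`. -/
noncomputable def extLength {α : Type*} [PartialOrder α] (T U : α) : ℕ :=
  sSup {n | ∃ c : Fin (n + 1) → α, StrictMono c ∧ c 0 = T ∧ c (Fin.last n) = U}

/-!
Contraction along `S → R' ⊗ S` embeds the lattice `[R', R' ⊗ S]` into `[R, S]`, because for a flat
epimorphism every `R'`-submodule of `R' ⊗ S` is the base change of its contraction. The image is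
the whole interval `[R₀, S]`, where `R₀` is the contraction of `R'`: by FCP, every subalgebra above
`R₀` is reached from `R₀` by finitely many minimal extensions, and being a contraction passes up
along a minimal extension. Maximal chains of `[R', R' ⊗ S]` thus become maximal chains from `R₀`
to `S`, and these have equal length since one fixed maximal chain from `R` to `R₀` completes all
of them to maximal chains of `[R, S]`.
-/

open TensorProduct

section Order

theorem wellFoundedLT_of_forall_isChain_finite {α : Type*} [Preorder α]
    (h : ∀ C : Set α, IsChain (· ≤ ·) C → C.Finite) : WellFoundedLT α := by
  refine ⟨RelEmbedding.wellFounded_iff_isEmpty.2 ⟨fun e => ?_⟩⟩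
  have he : StrictAnti e := fun _ _ hab => e.map_rel_iff.2 hab
  exact Set.infinite_range_of_injective e.injective (h _ he.antitone.isChain_range)

theorem wellFoundedGT_of_forall_isChain_finite {α : Type*} [Preorder α]
    (h : ∀ C : Set α, IsChain (· ≤ ·) C → C.Finite) : WellFoundedGT α :=
  have := wellFoundedLT_of_forall_isChain_finite (α := αᵒᵈ) fun C hC => h C hC.symm
  inferInstanceAs (WellFoundedLT αᵒᵈ)

variable {α β : Type*} [PartialOrder α] [PartialOrder β]

theorem exists_isMaxChainFromTo [WellFoundedLT α] [WellFoundedGT α] {T U : α} (h : T ≤ U) :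
    ∃ n c, IsMaxChainFromTo T U n c := by
  obtain ⟨a, h0, n, hn, ha⟩ := exists_covBy_seq_of_wellFoundedLT_wellFoundedGT_of_le h
  exact ⟨n, fun i => a i, h0, hn, fun i => ha i i.2⟩

theorem IsMaxChainFromTo.exists_append {T U V : α} {n m : ℕ} {c : Fin (n + 1) → α}
    {d : Fin (m + 1) → α} (hc : IsMaxChainFromTo T U n c) (hd : IsMaxChainFromTo U V m d) :
    ∃ e, IsMaxChainFromTo T V (n + m) e := by
  let p : RelSeries {(a, b) : α × α | a ⋖ b} := ⟨n, c, hc.2.2⟩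
  let q : RelSeries {(a, b) : α × α | a ⋖ b} := ⟨m, d, hd.2.2⟩
  have hpq : p.last = q.head := hc.2.1.trans hd.1.symm
  exact ⟨p.smash q hpq, (p.head_smash hpq).trans hc.1, (p.last_smash hpq).trans hd.2.1,
    (p.smash q hpq).step⟩

theorem IsMaxChainFromTo.map (f : α ↪o β) (hf : (Set.range f).OrdConnected) {T U : α} {n : ℕ}
    {c : Fin (n + 1) → α} (hc : IsMaxChainFromTo T U n c) :
    IsMaxChainFromTo (f T) (f U) n (f ∘ c) :=
  ⟨congrArg f hc.1, congrArg f hc.2.1, fun i => (hc.2.2 i).image f hf⟩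

theorem IsCatenarianFromTo.mono_left [WellFoundedLT α] [WellFoundedGT α] {T U V : α}
    (h : IsCatenarianFromTo T V) (hTU : T ≤ U) : IsCatenarianFromTo U V := by
  intro n m c d hc hd
  obtain ⟨k, b, hb⟩ := exists_isMaxChainFromTo hTU
  obtain ⟨c', hc'⟩ := hb.exists_append hc
  obtain ⟨d', hd'⟩ := hb.exists_append hd
  exact Nat.add_left_cancel (h _ _ _ _ hc' hd')

theorem IsCatenarianFromTo.of_orderEmbedding (f : α ↪o β) (hf : (Set.range f).OrdConnected)
    {T U : α} (h : IsCatenarianFromTo (f T) (f U)) : IsCatenarianFromTo T U :=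
  fun _ _ _ _ hc hd => h _ _ _ _ (hc.map f hf) (hd.map f hf)

end Order

section Submodule

variable {R R' M : Type*} [CommRing R] [CommRing R'] [Algebra R R'] [AddCommGroup M] [Module R M]

/-- The contraction to `M` of an `R'`-submodule of `R' ⊗ M`: its preimage under `x ↦ 1 ⊗ x`. -/
def contraction (N : Submodule R' (R' ⊗[R] M)) : Submodule R M :=
  (N.restrictScalars R).comap (TensorProduct.mk R R' M 1)

theorem gc_baseChange_contraction :
    GaloisConnection (Submodule.baseChange R') (contraction (R := R) (R' := R') (M := M)) :=
  fun P N => by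
    rw [Submodule.baseChange_eq_span, Submodule.span_le]
    exact Set.image_subset_iff

theorem baseChange_ker [Module.Flat R R'] {M' : Type*} [AddCommGroup M'] [Module R M']
    (f : M →ₗ[R] M') :
    (LinearMap.ker f).baseChange R' = LinearMap.ker (f.baseChange R') :=
  (Module.Flat.ker_lTensor_eq R' R' f).symm

/-- The map `M → (R' ⊗ M) / N` has kernel `contraction N`. Tensoring it with the flat module `R'`
and identifying `R' ⊗ Q` with `Q` for the `R'`-module `Q = (R' ⊗ M) / N`, which is where the
epimorphism enters, gives the quotient map of `N`. -/
theorem baseChange_contraction [Module.Flat R R'] [Algebra.IsEpi R R']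
    (N : Submodule R' (R' ⊗[R] M)) : (contraction N).baseChange R' = N := by
  let g : M →ₗ[R] (R' ⊗[R] M) ⧸ N := N.mkQ.restrictScalars R ∘ₗ TensorProduct.mk R R' M 1
  have ker_g : LinearMap.ker g = contraction N := by
    ext x
    exact Submodule.Quotient.mk_eq_zero N
  let e := TensorProduct.lid' R R' ((R' ⊗[R] M) ⧸ N)
  have lid_comp : e.toLinearMap ∘ₗ g.baseChange R' = N.mkQ := by
    ext x
    simp [e, g]
  calc (contraction N).baseChange R' = LinearMap.ker (g.baseChange R') := by
        rw [← ker_g, baseChange_ker]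
    _ = LinearMap.ker (e.toLinearMap ∘ₗ g.baseChange R') := (e.ker_comp _).symm
    _ = N := by rw [lid_comp, Submodule.ker_mkQ]

theorem contraction_le_contraction_iff [Module.Flat R R'] [Algebra.IsEpi R R']
    {N N' : Submodule R' (R' ⊗[R] M)} : contraction N ≤ contraction N' ↔ N ≤ N' := by
  rw [← gc_baseChange_contraction.le_iff_le, baseChange_contraction]

theorem map_rid_baseChange (I : Ideal R) :
    (Submodule.baseChange R' I).map (AlgebraTensorModule.rid R R' R').toLinearMap =
      I.map (algebraMap R R') := by
  rw [Submodule.baseChange_eq_span, Submodule.map_span, Ideal.map, Ideal.span]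
  congr 1
  ext
  simp [Algebra.smul_def]

theorem one_tmul_one_mem_baseChange_iff {I : Ideal R} :
    (1 : R') ⊗ₜ[R] (1 : R) ∈ Submodule.baseChange R' I ↔ I.map (algebraMap R R') = ⊤ := by
  rw [Ideal.eq_top_iff_one, ← map_rid_baseChange, Submodule.mem_map_equiv]
  simp

theorem one_tmul_mem_baseChange_of_map_colon_eq_top {N : Submodule R M} {x : M}
    (hx : (N.colon {x}).map (algebraMap R R') = ⊤) : (1 : R') ⊗ₜ[R] x ∈ N.baseChange R' := by
  have map_le : (N.colon {x}).map (algebraMap R R') ≤ (N.baseChange R').colon {1 ⊗ₜ[R] x} := by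
    refine Ideal.map_le_iff_le_comap.2 fun a ha => ?_
    rw [Submodule.mem_colon_singleton] at ha
    rw [Ideal.mem_comap, Submodule.mem_colon_singleton, algebraMap_smul, ← TensorProduct.tmul_smul]
    exact Submodule.tmul_mem_baseChange_of_mem 1 ha
  have one_mem : (1 : R') ∈ (N.baseChange R').colon {1 ⊗ₜ[R] x} := map_le (hx ▸ Submodule.mem_top)
  rwa [Submodule.mem_colon_singleton, one_smul] at one_mem

theorem map_colon_eq_top_of_one_tmul_mem_baseChange [Module.Flat R R'] {N : Submodule R M} {x : M}
    (hx : (1 : R') ⊗ₜ[R] x ∈ N.baseChange R') : (N.colon {x}).map (algebraMap R R') = ⊤ := by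
  let g : R →ₗ[R] M ⧸ N := N.mkQ ∘ₗ LinearMap.toSpanSingleton R M x
  have ker_g : LinearMap.ker g = N.colon {x} := by
    ext r
    simp [g, Submodule.mem_colon_singleton, ← Submodule.Quotient.mk_smul]
  rw [← one_tmul_one_mem_baseChange_iff, ← ker_g, baseChange_ker]
  rw [← N.ker_mkQ, baseChange_ker] at hx
  simpa [g] using hx

/-- `N` is contracted with respect to `R → R'` if it is the contraction of some `R'`-submodule of
`R' ⊗ M`, equivalently of its own base change. -/
def IsContracted (R' : Type*) [CommRing R'] [Algebra R R'] (N : Submodule R M) : Prop :=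
  contraction (N.baseChange R') = N

theorem isContracted_contraction (N : Submodule R' (R' ⊗[R] M)) :
    IsContracted R' (contraction N) :=
  gc_baseChange_contraction.u_l_u_eq_u N

theorem isContracted_of_forall_map_colon_eq_top [Module.Flat R R'] {N : Submodule R M}
    (h : ∀ x, (N.colon {x}).map (algebraMap R R') = ⊤ → x ∈ N) : IsContracted R' N :=
  le_antisymm (fun x hx => h x (map_colon_eq_top_of_one_tmul_mem_baseChange hx))
    (gc_baseChange_contraction.le_u_l N)

theorem IsContracted.mem_of_map_colon_eq_top {N : Submodule R M} (hN : IsContracted R' N) {x : M}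
    (hx : (N.colon {x}).map (algebraMap R R') = ⊤) : x ∈ N :=
  hN.le (one_tmul_mem_baseChange_of_map_colon_eq_top hx)

theorem IsContracted.exists_forall_pow_smul_notMem {N : Submodule R M}
    (hN : IsContracted R' N) {I : Ideal R} (hI : I.map (algebraMap R R') = ⊤) {x : M}
    (hx : x ∉ N) : ∃ a ∈ I, ∀ n : ℕ, a ^ n • x ∉ N := by
  by_contra! h
  have I_le : I ≤ (N.colon {x}).radical := fun a ha =>
    (h a ha).imp fun _ => Submodule.mem_colon_singleton.2
  have map_radical : ((N.colon {x}).map (algebraMap R R')).radical = ⊤ :=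
    top_le_iff.1 (hI ▸ (Ideal.map_mono I_le).trans (Ideal.map_radical_le _))
  exact hx (hN.mem_of_map_colon_eq_top (Ideal.radical_eq_top.1 map_radical))

/-- Surjectivity allows `x` to be moved by an element of `P` so that `a • x ∈ N`; then `a` kills the
image of `(P.colon {x}) • x` in `P / N`, which therefore vanishes by injectivity. -/
theorem IsContracted.mem_of_smul_bijective {N P : Submodule R M}
    (hN : IsContracted R' N) (hNP : N ≤ P) {a : R} (ha_inj : ∀ v ∈ P, a • v ∈ N → v ∈ N)
    (ha_surj : ∀ v ∈ P, ∃ w ∈ P, v - a • w ∈ N) {x : M} (hax : a • x ∈ P)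
    (hx : (P.colon {x}).map (algebraMap R R') = ⊤) : x ∈ P := by
  obtain ⟨w, hw, hxw⟩ := ha_surj _ hax
  rw [← smul_sub] at hxw
  have colon_le : P.colon {x} ≤ N.colon {x - w} := by
    intro b hb
    rw [Submodule.mem_colon_singleton] at hb ⊢
    refine ha_inj _ ?_ ?_
    · rw [smul_sub]
      exact P.sub_mem hb (P.smul_mem b hw)
    · rw [smul_comm]
      exact N.smul_mem b hxw
  have sub_mem : x - w ∈ N :=
    hN.mem_of_map_colon_eq_top (top_le_iff.1 (hx ▸ Ideal.map_mono colon_le))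
  exact (P.sub_mem_iff_left hw).1 (hNP sub_mem)

end Submodule

section Subalgebra

variable {R R' S : Type*} [CommRing R] [CommRing R'] [Algebra R R'] [CommRing S] [Algebra R S]

/-- The subalgebra of the elements of `S` carried into `T` by some element of the submonoid `P`. -/
def submonoidSaturation (P : Submonoid R) (T : Subalgebra R S) : Subalgebra R S where
  carrier := {x | ∃ p ∈ P, p • x ∈ T}
  mul_mem' := by
    rintro x y ⟨p, hp, hx⟩ ⟨q, hq, hy⟩
    refine ⟨p * q, P.mul_mem hp hq, ?_⟩
    rw [← smul_mul_smul_comm]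
    exact T.mul_mem hx hy
  add_mem' := by
    rintro x y ⟨p, hp, hx⟩ ⟨q, hq, hy⟩
    refine ⟨p * q, P.mul_mem hp hq, ?_⟩
    rw [smul_add]
    refine T.add_mem ?_ ?_
    · rw [mul_comm, mul_smul]
      exact T.smul_mem hx q
    · rw [mul_smul]
      exact T.smul_mem hy p
  algebraMap_mem' r := ⟨1, P.one_mem, T.smul_mem (T.algebraMap_mem r) 1⟩

/-- The subalgebra `T + aU` for an extension `T ≤ U` of subalgebras. -/
def addSMul {T U : Subalgebra R S} (hTU : T ≤ U) (a : R) : Subalgebra R S where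
  carrier := {x | ∃ v ∈ U, x - a • v ∈ T}
  mul_mem' := by
    rintro x y ⟨v, hv, hx⟩ ⟨w, hw, hy⟩
    refine ⟨(x - a • v) * w + v * (y - a • w) + a • (v * w), ?_, ?_⟩
    · exact add_mem (add_mem (mul_mem (hTU hx) hw) (mul_mem hv (hTU hy)))
        (U.smul_mem (mul_mem hv hw) a)
    · convert T.mul_mem hx hy using 1
      simp only [Algebra.smul_def]
      ring
  add_mem' := by
    rintro x y ⟨v, hv, hx⟩ ⟨w, hw, hy⟩
    refine ⟨v + w, add_mem hv hw, ?_⟩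
    rw [smul_add, add_sub_add_comm]
    exact add_mem hx hy
  algebraMap_mem' r := ⟨0, U.zero_mem, by simp⟩

theorem mem_of_smul_mem_of_covBy {T U : Subalgebra R S} (hTU : T ⋖ U) {a : R} {u : S} (hu : u ∈ U)
    (hau : ∀ n : ℕ, a ^ n • u ∉ T) {v : S} (hv : v ∈ U) (hav : a • v ∈ T) : v ∈ T := by
  let W := submonoidSaturation (Submonoid.powers a) T
  have T_le : T ≤ U ⊓ W := fun t ht => ⟨hTU.le ht, 1, one_mem _, T.smul_mem ht 1⟩
  rcases hTU.eq_or_eq T_le inf_le_left with inf_eq | inf_eq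
  · exact inf_eq.le ⟨hv, a, Submonoid.mem_powers a, hav⟩
  · obtain ⟨_, ⟨n, rfl⟩, hn⟩ := (inf_eq.ge hu).2
    exact absurd hn (hau n)

theorem exists_sub_smul_mem_of_covBy {T U : Subalgebra R S} (hTU : T ⋖ U) {a : R} {u : S}
    (hu : u ∈ U) (hau : a • u ∉ T) {v : S} (hv : v ∈ U) : ∃ w ∈ U, v - a • w ∈ T := by
  let W := addSMul hTU.le a
  have T_le : T ≤ W := fun t ht => ⟨0, U.zero_mem, by simpa using ht⟩
  have le_U : W ≤ U := fun x ⟨w, hw, hxw⟩ =>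
    sub_add_cancel x (a • w) ▸ U.add_mem (hTU.le hxw) (U.smul_mem hw a)
  rcases hTU.eq_or_eq T_le le_U with W_eq | W_eq
  · exact absurd (W_eq.le ⟨u, hu, by simp⟩) hau
  · exact W_eq.ge hv

/-- By minimality each `a : R` acts bijectively on `U / T` unless every element of `U / T` is killed
by a power of `a`. The latter cannot happen for all `a` in the colon ideal of `x`, as `T` is
contracted. -/
theorem IsContracted.of_covBy [Module.Flat R R'] {T U : Subalgebra R S}
    (hT : IsContracted R' (Subalgebra.toSubmodule T)) (hTU : T ⋖ U) :
    IsContracted R' (Subalgebra.toSubmodule U) := by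
  refine isContracted_of_forall_map_colon_eq_top fun x hx => ?_
  obtain ⟨u, hu, huT⟩ := SetLike.exists_of_lt hTU.lt
  obtain ⟨a, hax, hau⟩ := hT.exists_forall_pow_smul_notMem hx huT
  exact hT.mem_of_smul_bijective hTU.le
    (fun v hv hav => mem_of_smul_mem_of_covBy hTU hu hau hv hav)
    (fun v hv => exists_sub_smul_mem_of_covBy hTU hu (by simpa using hau 1) hv)
    (Submodule.mem_colon_singleton.1 hax) hx

theorem IsContracted.of_le [WellFoundedLT (Subalgebra R S)] [WellFoundedGT (Subalgebra R S)]
    [Module.Flat R R'] {T U : Subalgebra R S}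
    (hT : IsContracted R' (Subalgebra.toSubmodule T)) (hTU : T ≤ U) :
    IsContracted R' (Subalgebra.toSubmodule U) := by
  obtain ⟨c, rfl, n, rfl, hc⟩ := exists_covBy_seq_of_wellFoundedLT_wellFoundedGT_of_le hTU
  have : ∀ i ≤ n, IsContracted R' (Subalgebra.toSubmodule (c i)) := by
    intro i hi
    induction i with
    | zero => exact hT
    | succ i ih => exact (ih (by lia)).of_covBy (hc i (by lia))
  exact this n le_rfl

/-- The contraction to `S` of an `R'`-subalgebra of `R' ⊗ S`, as an `R`-subalgebra of `S`. -/
def subalgebraContraction (N : Subalgebra R' (R' ⊗[R] S)) : Subalgebra R S :=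
  (N.restrictScalars R).comap Algebra.TensorProduct.includeRight

theorem toSubmodule_subalgebraContraction (N : Subalgebra R' (R' ⊗[R] S)) :
    Subalgebra.toSubmodule (subalgebraContraction N) = contraction (Subalgebra.toSubmodule N) :=
  rfl

theorem toSubmodule_baseChange (T : Subalgebra R S) :
    Subalgebra.toSubmodule (T.baseChange R') = (Subalgebra.toSubmodule T).baseChange R' :=
  rfl

/-- `subalgebraContraction` as an order embedding of `[R', R' ⊗ S]` into `[R, S]`. -/
def subalgebraContractionEmbedding [Module.Flat R R'] [Algebra.IsEpi R R'] :
    Subalgebra R' (R' ⊗[R] S) ↪o Subalgebra R S :=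
  OrderEmbedding.ofMapLEIff subalgebraContraction fun N N' =>
    contraction_le_contraction_iff (N := Subalgebra.toSubmodule N) (N' := Subalgebra.toSubmodule N')

theorem subalgebraContraction_top : subalgebraContraction (⊤ : Subalgebra R' (R' ⊗[R] S)) = ⊤ :=
  rfl

theorem mem_range_subalgebraContraction_iff {T : Subalgebra R S} :
    T ∈ Set.range (subalgebraContraction (R := R) (R' := R') (S := S)) ↔
      IsContracted R' (Subalgebra.toSubmodule T) := by
  constructor
  · rintro ⟨N, rfl⟩
    rw [toSubmodule_subalgebraContraction]
    exact isContracted_contraction _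
  · refine fun hT => ⟨T.baseChange R', Subalgebra.toSubmodule_injective ?_⟩
    rw [toSubmodule_subalgebraContraction, toSubmodule_baseChange]
    exact hT

theorem range_subalgebraContraction [WellFoundedLT (Subalgebra R S)]
    [WellFoundedGT (Subalgebra R S)] [Module.Flat R R'] :
    Set.range (subalgebraContraction (R := R) (R' := R') (S := S)) =
      Set.Ici (subalgebraContraction (⊥ : Subalgebra R' (R' ⊗[R] S))) := by
  refine Set.Subset.antisymm ?_ fun T hT => ?_
  · rintro _ ⟨N, rfl⟩
    exact fun x hx => (bot_le : ⊥ ≤ N) hx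
  · have hbot := mem_range_subalgebraContraction_iff.1
      (Set.mem_range_self (⊥ : Subalgebra R' (R' ⊗[R] S)))
    exact mem_range_subalgebraContraction_iff.2 (hbot.of_le hT)

end Subalgebra

theorem stmt_8_general {R S R' : Type*} [CommRing R] [CommRing S] [CommRing R'] [Algebra R S]
    [Algebra R R'] [Module.Flat R R'] [Algebra.IsEpi R R'] (hFCP : IsFCPExt R S)
    (hcat : IsCatenarianExt R S) : IsCatenarianExt R' (R' ⊗[R] S) := by
  have := wellFoundedLT_of_forall_isChain_finite hFCP
  have := wellFoundedGT_of_forall_isChain_finite hFCP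
  let f : Subalgebra R' (R' ⊗[R] S) ↪o Subalgebra R S := subalgebraContractionEmbedding
  have range_f : Set.range f = Set.Ici (f ⊥) := range_subalgebraContraction
  have f_top : f ⊤ = ⊤ := subalgebraContraction_top
  refine .of_orderEmbedding f (range_f ▸ Set.ordConnected_Ici) ?_
  rw [f_top]
  exact hcat.mono_left bot_le

open TensorProduct in
/-- If `R ⊆ S` is a catenarian FCP extension and `R → R'` is a flat
epimorphism of commutative rings, then `R' ⊆ R' ⊗_R S` is catenarian. -/
theorem stmt_8 {R S R' : Type u} [CommRing R] [CommRing S] [CommRing R']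
    [Algebra R S] [Algebra R R']
    (hinj : Function.Injective (algebraMap R S)) (hFCP : IsFCPExt R S)
    (hcat : IsCatenarianExt R S)
    (hflat : Module.Flat R R')
    (hepi : CategoryTheory.Epi (CommRingCat.ofHom (algebraMap R R'))) :
    IsCatenarianExt R' (R' ⊗[R] S) := by
  have : Algebra.IsEpi R R' := CommRingCat.epi_iff_epi.1 hepi
  exact stmt_8_general hFCP hcat
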